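/- Let k be an algebraically closed field of characteristic 3 and let g = sl_3(k) be the Lie algebra of traceless 3×3 matrices over k. Then the third Chevalley–Eilenberg cohomology of g with trivial coefficients satisfies dim_k H^3(g, k) = 7. -/

import Mathlib

/-! Chevalley–Eilenberg cohomology of a Lie algebra with coefficients in a module. -/

section ChevalleyEilenberg

variable (k : Type*) [Field k]
variable (g : Type*) [LieRing g] [LieAlgebra k g]
variable (M : Type*) [AddCommGroup M] [Module k M] [LieRingModule g M] [LieModule k g M]

/-- The Chevalley–Eilenberg differential, as a raw function from alternating `n`-cochains
to `(n+1)`-ary functions: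
`dψ(l₀,…,lₙ) = Σ_{i<j} (−1)^{i+j} ψ(⁅lᵢ,lⱼ⁆, …, l̂ᵢ, …, l̂ⱼ, …) + Σ_i (−1)^i ⁅lᵢ, ψ(…, l̂ᵢ, …)⁆`
(indices written from 0; this is the paper's formula with 1-based indices shifted by one). -/
def ceD : ∀ {n : ℕ}, (g [⋀^Fin n]→ₗ[k] M) → ((Fin (n + 1) → g) → M)
  | 0, ψ, v => ⁅v 0, ψ ![]⁆
  | (n + 1), ψ, v =>
      (∑ i : Fin (n + 2), ∑ j : Fin (n + 2),
        if h : i < j then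
          ((-1 : ℤ) ^ (i.val + j.val)) •
            ψ (Fin.cons ⁅v i, v j⁆
              (fun l => v (i.succAbove
                ((j.pred (Fin.pos_iff_ne_zero.mp (lt_of_le_of_lt i.zero_le h))).succAbove l))))
        else 0)
      + ∑ i : Fin (n + 2), ((-1 : ℤ) ^ i.val) • ⁅v i, ψ (fun l => v (i.succAbove l))⁆

variable {k g M}

private lemma dite_add_zero {P : Prop} [Decidable P] {N : Type*} [AddZeroClass N]
    (A B : P → N) :
    (dite P (fun h => A h + B h) fun _ => 0) =
      (dite P A fun _ => 0) + (dite P B fun _ => 0) := by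
  split_ifs <;> simp

private lemma dite_smul_zero {P : Prop} [Decidable P] {N : Type*} [AddCommGroup N] [Module k N]
    (c : k) (A : P → N) :
    (dite P (fun h => c • A h) fun _ => 0) = c • dite P A fun _ => 0 := by
  split_ifs <;> simp

lemma ceD_add {n : ℕ} (ψ φ : g [⋀^Fin n]→ₗ[k] M) (v : Fin (n + 1) → g) :
    ceD k g M (ψ + φ) v = ceD k g M ψ v + ceD k g M φ v := by
  cases n with
  | zero => simp [ceD]
  | succ n =>
    simp only [ceD, AlternatingMap.add_apply, smul_add, lie_add, dite_add_zero,
      Finset.sum_add_distrib]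
    abel

lemma ceD_smul {n : ℕ} (c : k) (ψ : g [⋀^Fin n]→ₗ[k] M) (v : Fin (n + 1) → g) :
    ceD k g M (c • ψ) v = c • ceD k g M ψ v := by
  cases n with
  | zero => simp [ceD]
  | succ n =>
    simp only [ceD, AlternatingMap.smul_apply, lie_smul, smul_comm _ c, dite_smul_zero,
      ← Finset.smul_sum, smul_add]

lemma ceD_zero {n : ℕ} (v : Fin (n + 1) → g) :
    ceD k g M (0 : g [⋀^Fin n]→ₗ[k] M) v = 0 := by
  cases n with
  | zero => simp [ceD]
  | succ n => simp [ceD]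

variable (k g M)

/-- The space of Chevalley–Eilenberg `n`-cocycles `Zⁿ(g, M)`. -/
def ceZ (n : ℕ) : Submodule k (g [⋀^Fin n]→ₗ[k] M) where
  carrier := {ψ | ∀ v, ceD k g M ψ v = 0}
  add_mem' := by
    intro ψ φ hψ hφ v
    rw [ceD_add, hψ v, hφ v, add_zero]
  zero_mem' := fun v => ceD_zero v
  smul_mem' := by
    intro c ψ hψ v
    rw [ceD_smul, hψ v, smul_zero]

/-- The space of Chevalley–Eilenberg `n`-coboundaries `Bⁿ(g, M)`: in positive degree, the
alternating `n`-cochains that agree (as functions) with `dφ` for some `(n-1)`-cochain `φ`. -/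
def ceB : (n : ℕ) → Submodule k (g [⋀^Fin n]→ₗ[k] M)
  | 0 => ⊥
  | (n + 1) =>
      { carrier := {ψ | ∃ φ : g [⋀^Fin n]→ₗ[k] M, ∀ v, ψ v = ceD k g M φ v}
        add_mem' := by
          rintro ψ χ ⟨φ₁, h₁⟩ ⟨φ₂, h₂⟩
          exact ⟨φ₁ + φ₂, fun v => by
            rw [AlternatingMap.add_apply, h₁ v, h₂ v, ceD_add]⟩
        zero_mem' := ⟨0, fun v => by rw [AlternatingMap.zero_apply, ceD_zero]⟩
        smul_mem' := by
          rintro c ψ ⟨φ, h⟩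
          exact ⟨c • φ, fun v => by rw [AlternatingMap.smul_apply, h v, ceD_smul]⟩ }

/-- The `n`-th Chevalley–Eilenberg cohomology space `Hⁿ(g, M)`: the quotient of the space of
`n`-cocycles by the space of `n`-coboundaries (viewed inside the cocycles). -/
abbrev ceH (n : ℕ) : Type _ :=
  ↥(ceZ k g M n) ⧸ (ceB k g M n).comap (ceZ k g M n).subtype

end ChevalleyEilenberg

/-- The Lie algebra `sl₃(k)` of traceless `3 × 3` matrices over `k`. -/
abbrev sl3 (k : Type*) [Field k] := ↥(LieAlgebra.SpecialLinear.sl (Fin 3) k)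

/-- `k` as the trivial one-dimensional module over `sl₃(k)` (zero bracket action). -/
instance (k : Type*) [Field k] : LieRingModule (sl3 k) k where
  bracket _ _ := 0
  add_lie _ _ _ := by simp
  lie_add _ _ _ := by simp
  leibniz_lie _ _ _ := by simp

instance (k : Type*) [Field k] : LieModule k (sl3 k) k where
  smul_lie _ _ _ := by simp [Bracket.bracket]
  lie_smul _ _ _ := by simp [Bracket.bracket]

/-!
In characteristic `3` the Cartan integers `2` and `-1` agree, so every coroot acts on all the root
vectors `e i = E_{i,i+1}` by `-1` and on all `f i = E_{i+1,i}` by `1` (indices modulo `3`). By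
Cartan's formula a cocycle is therefore cohomologous to one supported on the triples of weight zero
modulo `3`, namely `(e, e, e)`, `(f, f, f)` and `(h, e, f)`, and a small linear computation there
leaves seven coordinates. They are attained by the Cartan form of the trace form and by the forms
`det (⁅x, v⁆, ⁅y, v⁆, ⁅z, v⁆)` for `v` in a basis of the standard representation or of its dual.
-/

section AlternatingMaps

variable {R M N : Type*} [CommRing R] [AddCommGroup M] [Module R M] [AddCommGroup N] [Module R N]

lemma alternatingMap_vecCons_neg {n : ℕ} (ψ : M [⋀^Fin (n + 1)]→ₗ[R] N) (x : M) (v : Fin n → M) :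
    ψ (Matrix.vecCons (-x) v) = -ψ (Matrix.vecCons x v) := by
  rw [← neg_one_smul R x, ψ.map_vecCons_smul, neg_one_smul]

lemma alternatingMap_vecCons_zero {n : ℕ} (ψ : M [⋀^Fin (n + 1)]→ₗ[R] N) (v : Fin n → M) :
    ψ (Matrix.vecCons 0 v) = 0 :=
  ψ.map_coord_zero 0 rfl

lemma alternatingMap_vec2_swap (φ : M [⋀^Fin 2]→ₗ[R] N) (x y : M) : φ ![y, x] = -φ ![x, y] := by
  rw [← φ.map_swap ![x, y] (i := 0) (j := 1) (by decide)]
  congr 1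
  ext i
  fin_cases i <;> rfl

lemma alternatingMap_vec3_swap (ψ : M [⋀^Fin 3]→ₗ[R] N) (x y z : M) :
    ψ ![x, z, y] = -ψ ![x, y, z] :=
  alternatingMap_vec2_swap (ψ.curryLeft x) y z

lemma alternatingMap_vec3_swap_left (ψ : M [⋀^Fin 3]→ₗ[R] N) (x y z : M) :
    ψ ![y, x, z] = -ψ ![x, y, z] := by
  rw [← ψ.map_swap ![x, y, z] (i := 0) (j := 1) (by decide)]
  congr 1
  ext i
  fin_cases i <;> rfl

lemma alternatingMap_vec3_rotate (ψ : M [⋀^Fin 3]→ₗ[R] N) (x y z : M) :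
    ψ ![y, z, x] = ψ ![x, y, z] := by
  rw [alternatingMap_vec3_swap, alternatingMap_vec3_swap_left, neg_neg]

lemma alternatingMap_vec3_cycle (ψ : M [⋀^Fin 3]→ₗ[R] N) (x : Fin 3 → M) (i : Fin 3) :
    ψ ![x (i + 2), x i, x (i + 1)] = ψ ![x 0, x 1, x 2] := by
  fin_cases i
  · exact (alternatingMap_vec3_rotate ψ _ _ _).symm
  · rfl
  · exact alternatingMap_vec3_rotate ψ _ _ _

lemma alternatingMap_vec3_self_left (ψ : M [⋀^Fin 3]→ₗ[R] N) (x y : M) : ψ ![x, x, y] = 0 :=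
  ψ.map_eq_zero_of_eq ![x, x, y] (i := 0) (j := 1) rfl (by decide)

lemma alternatingMap_vec3_self_outer (ψ : M [⋀^Fin 3]→ₗ[R] N) (x y : M) : ψ ![x, y, x] = 0 :=
  ψ.map_eq_zero_of_eq ![x, y, x] (i := 0) (j := 2) rfl (by decide)

/-- The alternating `3`-form attached to a function `T` of three vectors which is linear in the
first one and invariant under cyclic rotation, and vanishes when the first two vectors agree. -/
def alternatingMapOfCyclic (T : M → M → M → N)
    (map_add : ∀ x x' y z, T (x + x') y z = T x y z + T x' y z)
    (map_smul : ∀ (c : R) x y z, T (c • x) y z = c • T x y z)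
    (rotate : ∀ x y z, T y z x = T x y z) (self : ∀ x z, T x x z = 0) : M [⋀^Fin 3]→ₗ[R] N where
  toFun v := T (v 0) (v 1) (v 2)
  map_update_add' {inst} v i x x' := by
    obtain rfl : inst = instDecidableEqFin 3 := Subsingleton.elim _ _
    fin_cases i
    · simpa using map_add x x' (v 1) (v 2)
    · simpa [rotate (v 0)] using map_add x x' (v 2) (v 0)
    · simpa [← rotate _ (v 0) (v 1)] using map_add x x' (v 0) (v 1)
  map_update_smul' {inst} v i c x := by
    obtain rfl : inst = instDecidableEqFin 3 := Subsingleton.elim _ _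
    fin_cases i
    · simpa using map_smul c x (v 1) (v 2)
    · simpa [rotate (v 0)] using map_smul c x (v 2) (v 0)
    · simpa [← rotate _ (v 0) (v 1)] using map_smul c x (v 0) (v 1)
  map_eq_zero_of_eq' v i j hv hij := by
    have self₁₂ x y : T x y y = 0 := (rotate x y y).symm.trans (self y x)
    have self₀₂ x y : T x y x = 0 := (rotate x x y).trans (self x y)
    clear map_add map_smul rotate
    fin_cases i <;> fin_cases j <;> simp_all

/-- The alternating `2`-form `α ∧ β`. -/
def dualWedge (α β : Module.Dual R M) : M [⋀^Fin 2]→ₗ[R] R :=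
  Matrix.detRowAlternating.compLinearMap (LinearMap.pi ![α, β])

lemma dualWedge_apply (α β : Module.Dual R M) (x y : M) :
    dualWedge α β ![x, y] = α x * β y - β x * α y :=
  (Matrix.det_fin_two _).trans (by simp [mul_comm])

lemma alternatingMap_ext_of_strictMono {n m : ℕ} (b : Module.Basis (Fin m) R M)
    {ψ χ : M [⋀^Fin n]→ₗ[R] N}
    (h : ∀ v : Fin n → Fin m, StrictMono v → ψ (b ∘ v) = χ (b ∘ v)) : ψ = χ := by
  refine b.ext_alternating fun v hv ↦ ?_
  have hsorted : StrictMono (v ∘ Tuple.sort v) :=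
    (Tuple.monotone_sort v).strictMono_of_injective (hv.comp (Tuple.sort v).injective)
  have hperm := h _ hsorted
  rw [← Function.comp_assoc, ψ.map_perm, χ.map_perm] at hperm
  exact smul_left_cancel _ hperm

end AlternatingMaps

section TrivialCoefficients

variable {k L M : Type*} [Field k] [LieRing L] [LieAlgebra k L] [AddCommGroup M] [Module k M]

/-- The Chevalley–Eilenberg differential of a `2`-cochain with trivial coefficients, as an
alternating map. -/
def ceCoboundary₂ (φ : L [⋀^Fin 2]→ₗ[k] M) : L [⋀^Fin 3]→ₗ[k] M :=
  alternatingMapOfCyclic (fun x y z ↦ -(φ ![⁅x, y⁆, z] + φ ![⁅y, z⁆, x] + φ ![⁅z, x⁆, y]))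
    (fun x x' y z ↦ by
      have h := (φ.curryLeft ⁅y, z⁆).map_vecCons_add ![] x x'
      simp only [AlternatingMap.curryLeft_apply_apply] at h
      rw [add_lie, lie_add, φ.map_vecCons_add, φ.map_vecCons_add, h]
      abel)
    (fun c x y z ↦ by
      have h := (φ.curryLeft ⁅y, z⁆).map_vecCons_smul ![] c x
      simp only [AlternatingMap.curryLeft_apply_apply] at h
      rw [smul_lie, lie_smul, φ.map_vecCons_smul, φ.map_vecCons_smul, h]
      module)
    (fun x y z ↦ by abel)
    (fun x z ↦ by
      rw [lie_self, ← lie_skew x z, alternatingMap_vecCons_zero, alternatingMap_vecCons_neg]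
      abel)

@[simp]
lemma ceCoboundary₂_apply (φ : L [⋀^Fin 2]→ₗ[k] M) (v : Fin 3 → L) :
    ceCoboundary₂ φ v =
      -(φ ![⁅v 0, v 1⁆, v 2] + φ ![⁅v 1, v 2⁆, v 0] + φ ![⁅v 2, v 0⁆, v 1]) :=
  rfl

section Cochains

variable [LieRingModule L M] [LieModule.IsTrivial L M]

lemma ceD_two_of_isTrivial (φ : L [⋀^Fin 2]→ₗ[k] M) (v : Fin 3 → L) :
    ceD k L M φ v = ceCoboundary₂ φ v := by
  have cons_eq (x : L) (w : Fin 1 → L) : (Fin.cons x w : Fin 2 → L) = ![x, w 0] := by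
    ext i : 1
    fin_cases i <;> rfl
  have hskew : φ ![⁅v 2, v 0⁆, v 1] = -φ ![⁅v 0, v 2⁆, v 1] := by
    rw [← lie_skew, alternatingMap_vecCons_neg]
  simp only [ceD, trivial_lie_zero, cons_eq, smul_zero, Finset.sum_const_zero, add_zero,
    ceCoboundary₂_apply, hskew, Fin.sum_univ_succ, Fin.sum_univ_zero]
  simp [Fin.succAbove]
  abel

lemma ceD_three_of_isTrivial (ψ : L [⋀^Fin 3]→ₗ[k] M) (v : Fin 4 → L) :
    ceD k L M ψ v =
      -ψ ![⁅v 0, v 1⁆, v 2, v 3] + ψ ![⁅v 0, v 2⁆, v 1, v 3] - ψ ![⁅v 0, v 3⁆, v 1, v 2]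
      - ψ ![⁅v 1, v 2⁆, v 0, v 3] + ψ ![⁅v 1, v 3⁆, v 0, v 2] - ψ ![⁅v 2, v 3⁆, v 0, v 1] := by
  have cons_eq (x : L) (w : Fin 2 → L) : (Fin.cons x w : Fin 3 → L) = ![x, w 0, w 1] := by
    ext i : 1
    fin_cases i <;> rfl
  simp only [ceD, trivial_lie_zero, cons_eq, smul_zero, Finset.sum_const_zero, add_zero,
    Fin.sum_univ_succ, Fin.sum_univ_zero]
  simp [Fin.succAbove]
  abel

variable [LieModule k L M]

lemma mem_ceZ_three {ψ : L [⋀^Fin 3]→ₗ[k] M} :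
    ψ ∈ ceZ k L M 3 ↔ ∀ a b c d : L,
      ψ ![⁅a, b⁆, c, d] - ψ ![⁅a, c⁆, b, d] + ψ ![⁅b, c⁆, a, d]
      + ψ ![⁅a, d⁆, b, c] - ψ ![⁅b, d⁆, a, c] + ψ ![⁅c, d⁆, a, b] = 0 := by
  refine ⟨fun h a b c d ↦ ?_, fun h v ↦ ?_⟩
  · have hd : ceD k L M ψ ![a, b, c, d] = 0 := h _
    rw [ceD_three_of_isTrivial] at hd
    rw [← neg_eq_zero, ← hd]
    simp only [Matrix.cons_val]
    abel
  · rw [ceD_three_of_isTrivial, ← neg_eq_zero, ← h (v 0) (v 1) (v 2) (v 3)]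
    abel

lemma mem_ceB_three {ψ : L [⋀^Fin 3]→ₗ[k] M} :
    ψ ∈ ceB k L M 3 ↔ ∃ φ, ψ = ceCoboundary₂ φ :=
  exists_congr fun φ ↦ by simp only [ceD_two_of_isTrivial, AlternatingMap.ext_iff]

lemma ceCoboundary₂_mem_ceZ (φ : L [⋀^Fin 2]→ₗ[k] M) : ceCoboundary₂ φ ∈ ceZ k L M 3 := by
  have jacobi (x y z w : L) :
      φ ![⁅⁅x, y⁆, z⁆, w] - φ ![⁅⁅x, z⁆, y⁆, w] + φ ![⁅⁅y, z⁆, x⁆, w] = 0 := by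
    have h : ⁅⁅x, y⁆, z⁆ = ⁅⁅x, z⁆, y⁆ + -⁅⁅y, z⁆, x⁆ := by
      rw [lie_lie, ← lie_skew ⁅x, z⁆ y, ← lie_skew ⁅y, z⁆ x]
      abel
    rw [h, φ.map_vecCons_add, alternatingMap_vecCons_neg]
    abel
  have skew (x y z : L) : φ ![⁅x, y⁆, z] = -φ ![⁅y, x⁆, z] := by
    rw [← lie_skew, alternatingMap_vecCons_neg]
  refine mem_ceZ_three.2 fun a b c d ↦ ?_
  simp only [ceCoboundary₂_apply, Matrix.cons_val]
  rw [skew d ⁅a, b⁆, skew d ⁅a, c⁆, skew d ⁅b, c⁆, skew c ⁅a, d⁆, skew c ⁅b, d⁆, skew b ⁅c, d⁆,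
    alternatingMap_vec2_swap φ ⁅a, b⁆, alternatingMap_vec2_swap φ ⁅a, c⁆,
    alternatingMap_vec2_swap φ ⁅b, c⁆]
  linear_combination (norm := module)
    -jacobi a b c d + jacobi a b d c - jacobi a c d b + jacobi b c d a

/-- Cartan's formula `d ∘ ι_h + ι_h ∘ d = θ_h`, on a cocycle. -/
lemma ceCoboundary₂_curryLeft {ψ : L [⋀^Fin 3]→ₗ[k] M} (hψ : ψ ∈ ceZ k L M 3) (h x y z : L) :
    ceCoboundary₂ (ψ.curryLeft h) ![x, y, z] =
      -(ψ ![⁅h, x⁆, y, z] + ψ ![⁅h, y⁆, z, x] + ψ ![⁅h, z⁆, x, y]) := by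
  have hd := mem_ceZ_three.1 hψ h x y z
  have skew : ψ ![⁅z, x⁆, h, y] = -ψ ![⁅x, z⁆, h, y] := by
    rw [← lie_skew, alternatingMap_vecCons_neg]
  simp only [ceCoboundary₂_apply, AlternatingMap.curryLeft_apply_apply, Matrix.cons_val]
  rw [alternatingMap_vec3_swap_left ψ _ h, alternatingMap_vec3_swap_left ψ _ h,
    alternatingMap_vec3_swap_left ψ _ h, skew, alternatingMap_vec3_swap ψ ⁅h, y⁆ x z]
  linear_combination (norm := module) hd

lemma ceCoboundary₂_curryLeft_of_eigen {ψ : L [⋀^Fin 3]→ₗ[k] M} (hψ : ψ ∈ ceZ k L M 3)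
    {h x y z : L} {a b c : k} (hx : ⁅h, x⁆ = a • x) (hy : ⁅h, y⁆ = b • y) (hz : ⁅h, z⁆ = c • z) :
    ceCoboundary₂ (ψ.curryLeft h) ![x, y, z] = -(a + b + c) • ψ ![x, y, z] := by
  rw [ceCoboundary₂_curryLeft hψ, hx, hy, hz, ψ.map_vecCons_smul, ψ.map_vecCons_smul,
    ψ.map_vecCons_smul, ← alternatingMap_vec3_rotate ψ z, alternatingMap_vec3_rotate ψ x]
  module

lemma mem_ceB_of_sq_weight {m : ℕ} (b : Module.Basis (Fin m) k L) {h : L} {wt : Fin m → k}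
    (hb : ∀ i, ⁅h, b i⁆ = wt i • b i) {ψ : L [⋀^Fin 3]→ₗ[k] M} (hψ : ψ ∈ ceZ k L M 3)
    (sq_weight : ∀ i j l, i < j → j < l →
      (wt i + wt j + wt l) ^ 2 • ψ ![b i, b j, b l] = ψ ![b i, b j, b l]) :
    ψ ∈ ceB k L M 3 := by
  let θ := ceCoboundary₂ (ψ.curryLeft h)
  refine mem_ceB_three.2 ⟨θ.curryLeft h, alternatingMap_ext_of_strictMono b fun v hv ↦ ?_⟩
  have hvec : b ∘ v = ![b (v 0), b (v 1), b (v 2)] := by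
    ext i : 1
    fin_cases i <;> rfl
  rw [hvec, ceCoboundary₂_curryLeft_of_eigen (ceCoboundary₂_mem_ceZ _) (hb _) (hb _) (hb _),
    ceCoboundary₂_curryLeft_of_eigen hψ (hb _) (hb _) (hb _), smul_smul, neg_mul_neg, ← sq,
    sq_weight _ _ _ (hv (by decide)) (hv (by decide))]

end Cochains

section CartanForm

variable {Φ : LinearMap.BilinForm k L}

lemma lieInvariant_lie_apply (inv : Φ.lieInvariant L) (x y z : L) : Φ ⁅x, y⁆ z = Φ x ⁅y, z⁆ := by
  rw [← lie_skew, map_neg, LinearMap.neg_apply, inv, neg_neg]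

variable (Φ) in
/-- The Cartan `3`-form `(x, y, z) ↦ Φ([x, y], z)` of an invariant symmetric bilinear form. -/
def cartanForm (symm : Φ.IsSymm) (inv : Φ.lieInvariant L) : L [⋀^Fin 3]→ₗ[k] k :=
  alternatingMapOfCyclic (fun x y z ↦ Φ ⁅x, y⁆ z)
    (fun x x' y z ↦ by rw [add_lie, map_add, LinearMap.add_apply])
    (fun c x y z ↦ by rw [smul_lie, map_smul, LinearMap.smul_apply])
    (fun x y z ↦ by rw [lieInvariant_lie_apply inv x, symm.eq])
    (fun x z ↦ by rw [lie_self, map_zero, LinearMap.zero_apply])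

lemma cartanForm_apply {symm : Φ.IsSymm} {inv} (v : Fin 3 → L) :
    cartanForm Φ symm inv v = Φ ⁅v 0, v 1⁆ (v 2) :=
  rfl

lemma cartanForm_mem_ceZ [LieRingModule L k] [LieModule k L k] [LieModule.IsTrivial L k]
    (symm : Φ.IsSymm) (inv : Φ.lieInvariant L) : cartanForm Φ symm inv ∈ ceZ k L k 3 := by
  refine mem_ceZ_three.2 fun a b c d ↦ ?_
  have jacobi : Φ ⁅⁅a, b⁆, c⁆ d - Φ ⁅⁅a, c⁆, b⁆ d + Φ ⁅⁅b, c⁆, a⁆ d = 0 := by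
    have h : ⁅⁅a, b⁆, c⁆ = ⁅⁅a, c⁆, b⁆ - ⁅⁅b, c⁆, a⁆ := by
      rw [lie_lie, ← lie_skew ⁅a, c⁆ b, ← lie_skew ⁅b, c⁆ a]
      abel
    rw [h, map_sub, LinearMap.sub_apply]
    ring
  have exchange (x y z : L) : Φ ⁅⁅x, d⁆, y⁆ z = Φ ⁅⁅y, z⁆, x⁆ d := by
    rw [lieInvariant_lie_apply inv ⁅x, d⁆, symm.eq, ← lieInvariant_lie_apply inv]
  simp only [cartanForm_apply, Matrix.cons_val, exchange]
  linear_combination 2 * jacobi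

end CartanForm

section OrbitForm

variable {V : Type*} [AddCommGroup V] [Module k V] [LieRingModule L V] [LieModule k L V]
  (b : Module.Basis (Fin 3) k V)

/-- The alternating `3`-form `(x, y, z) ↦ det (⁅x, v⁆, ⁅y, v⁆, ⁅z, v⁆)`: the pull-back of the volume
form of a three-dimensional representation along the infinitesimal orbit map of a vector `v`. -/
noncomputable def orbitForm (v : V) : L [⋀^Fin 3]→ₗ[k] k :=
  b.det.compLinearMap ((LieModule.toEnd k L V : L →ₗ[k] Module.End k V).flip v)

lemma orbitForm_apply (v : V) (x y z : L) :
    orbitForm b v ![x, y, z] = b.det ![⁅x, v⁆, ⁅y, v⁆, ⁅z, v⁆] := by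
  rw [orbitForm, AlternatingMap.compLinearMap_apply]
  congr 1
  ext i
  fin_cases i <;> rfl

lemma basis_det_derivation (f : Module.End k V) (x y z : V) :
    b.det ![f x, y, z] - b.det ![f y, x, z] + b.det ![f z, x, y] =
      LinearMap.trace k V f * b.det ![x, y, z] := by
  rw [LinearMap.trace_eq_matrix_trace k b]
  have repr_apply (u : V) (i : Fin 3) :
      b.repr (f u) i = ∑ j, LinearMap.toMatrix b b f i j * b.repr u j := by
    rw [← LinearMap.toMatrix_mulVec_repr b b]
    rfl
  simp only [Module.Basis.det_apply, Matrix.det_fin_three, Module.Basis.toMatrix_apply,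
    Matrix.cons_val, repr_apply, Fin.sum_univ_three, Matrix.trace_fin_three]
  ring

lemma orbitForm_mem_ceZ [LieRingModule L k] [LieModule k L k] [LieModule.IsTrivial L k]
    (trace_eq_zero : ∀ x, LinearMap.trace k V (LieModule.toEnd k L V x) = 0)
    (v : V) : orbitForm b v ∈ ceZ k L k 3 := by
  have invariant (x : L) (p q r : V) :
      b.det ![⁅x, p⁆, q, r] - b.det ![⁅x, q⁆, p, r] + b.det ![⁅x, r⁆, p, q] = 0 := by
    simpa [trace_eq_zero] using basis_det_derivation b (LieModule.toEnd k L V x) p q r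
  have det_lie (x y : L) (q r : V) :
      b.det ![⁅⁅x, y⁆, v⁆, q, r] = b.det ![⁅x, ⁅y, v⁆⁆, q, r] - b.det ![⁅y, ⁅x, v⁆⁆, q, r] := by
    rw [lie_lie, sub_eq_add_neg, AlternatingMap.map_vecCons_add, alternatingMap_vecCons_neg,
      sub_eq_add_neg]
  refine mem_ceZ_three.2 fun x y z w ↦ ?_
  simp only [orbitForm_apply, det_lie]
  linear_combination invariant x ⁅y, v⁆ ⁅z, v⁆ ⁅w, v⁆ - invariant y ⁅x, v⁆ ⁅z, v⁆ ⁅w, v⁆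
    + invariant z ⁅x, v⁆ ⁅y, v⁆ ⁅w, v⁆ - invariant w ⁅x, v⁆ ⁅y, v⁆ ⁅z, v⁆

end OrbitForm

end TrivialCoefficients

namespace sl3

variable {k : Type*} [Field k]

instance : LieModule.IsTrivial (sl3 k) k := ⟨fun _ _ ↦ rfl⟩

section RootVectors

variable (k)

/-- The root vector `E_{i,i+1}`, with the matrix indices read modulo `3`. -/
def e (i : Fin 3) : sl3 k := LieAlgebra.SpecialLinear.single i (i + 1) (by decide +revert) 1

/-- The root vector `E_{i+1,i}`, with the matrix indices read modulo `3`. -/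
def f (i : Fin 3) : sl3 k := LieAlgebra.SpecialLinear.single (i + 1) i (by decide +revert) 1

/-- The coroot `E_{i,i} - E_{i+1,i+1}`, with the matrix indices read modulo `3`. -/
def h (i : Fin 3) : sl3 k := LieAlgebra.SpecialLinear.singleSubSingle i (i + 1) 1

variable {k}

lemma val_e (i : Fin 3) : (e k i).val = Matrix.single i (i + 1) 1 := rfl

lemma val_f (i : Fin 3) : (f k i).val = Matrix.single (i + 1) i 1 := rfl

lemma val_h (i : Fin 3) :
    (h k i).val = Matrix.single i i 1 - Matrix.single (i + 1) (i + 1) 1 := rfl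

lemma lie_e_e (i : Fin 3) : ⁅e k i, e k (i + 1)⁆ = f k (i + 2) := by
  apply Subtype.ext
  fin_cases i <;> simp [val_e, val_f, Ring.lie_def]

lemma lie_f_f (i : Fin 3) : ⁅f k i, f k (i + 1)⁆ = -e k (i + 2) := by
  apply Subtype.ext
  fin_cases i <;> simp [val_e, val_f, Ring.lie_def]

lemma lie_e_f (i : Fin 3) : ⁅e k i, f k i⁆ = h k i := by
  apply Subtype.ext
  fin_cases i <;> simp [val_e, val_f, val_h, Ring.lie_def]

lemma lie_e_f_of_ne {i j : Fin 3} (hij : i ≠ j) : ⁅e k i, f k j⁆ = 0 := by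
  apply Subtype.ext
  fin_cases i <;> fin_cases j <;> simp_all [val_e, val_f, Ring.lie_def]

lemma lie_h_h (i j : Fin 3) : ⁅h k i, h k j⁆ = 0 := by
  apply Subtype.ext
  fin_cases i <;> fin_cases j <;> simp [val_h, Ring.lie_def, mul_sub, sub_mul]

lemma h_add_h_add_h : h k 0 + h k 1 + h k 2 = 0 := by
  apply Subtype.ext
  simp [val_h]

lemma lie_h_e [CharP k 3] (i j : Fin 3) : ⁅h k i, e k j⁆ = -e k j := by
  have add_self (A : Matrix (Fin 3) (Fin 3) k) : A + A = -A := by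
    linear_combination (norm := module) CharP.ofNat_eq_zero k 3 • A
  apply Subtype.ext
  fin_cases i <;> fin_cases j <;>
    simp [val_h, val_e, Ring.lie_def, mul_sub, sub_mul, add_self]

lemma lie_h_f [CharP k 3] (i j : Fin 3) : ⁅h k i, f k j⁆ = f k j := by
  have neg_sub_self (A : Matrix (Fin 3) (Fin 3) k) : -A - A = A := by
    linear_combination (norm := module) CharP.ofNat_eq_zero k 3 • -A
  apply Subtype.ext
  fin_cases i <;> fin_cases j <;>
    simp [val_h, val_f, Ring.lie_def, mul_sub, sub_mul, neg_sub_self]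

lemma trace_val (A : sl3 k) : Matrix.trace A.val = 0 :=
  LinearMap.mem_ker.1 A.2

end RootVectors

section Basis

variable (k)

/-- A basis which diagonalises the coroots. -/
noncomputable def eigenbasis : Module.Basis (Fin 8) k (sl3 k) :=
  let b : Fin 8 → sl3 k := ![h k 0, h k 1, e k 0, e k 1, e k 2, f k 0, f k 1, f k 2]
  .ofEquivFun
    { toFun A := ![A.1 0 0, A.1 0 0 + A.1 1 1, A.1 0 1, A.1 1 2, A.1 2 0, A.1 1 0, A.1 2 1, A.1 0 2]
      invFun := Fintype.linearCombination k b
      map_add' A B := by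
        ext i
        fin_cases i <;> simp [add_add_add_comm]
      map_smul' c A := by
        ext i
        fin_cases i <;> simp [mul_add]
      left_inv A := by
        have htrace : A.1 0 0 + A.1 1 1 + A.1 2 2 = 0 := by
          rw [← Matrix.trace_fin_three, trace_val]
        apply Subtype.ext
        ext i j
        fin_cases i <;> fin_cases j <;>
            simp [b, Fintype.linearCombination_apply, Fin.sum_univ_succ, val_h, val_e, val_f]
        all_goals linear_combination -htrace
      right_inv v := by
        ext i
        fin_cases i <;>
          simp [b, Fintype.linearCombination_apply, Fin.sum_univ_succ, val_h, val_e, val_f] }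

lemma coe_eigenbasis :
    ⇑(eigenbasis k) = ![h k 0, h k 1, e k 0, e k 1, e k 2, f k 0, f k 1, f k 2] := by
  ext i : 1
  rw [eigenbasis, Module.Basis.coe_ofEquivFun]
  exact (Fintype.linearCombination_apply_single _ _ _ _).trans (one_smul _ _)

/-- The eigenvalue of every `h k l` on `eigenbasis k i` in characteristic `3`, where the Cartan
integers `2` and `-1` agree; integral, so that weights are compared modulo `3`. -/
def weight : Fin 8 → ℤ := ![0, 0, -1, -1, -1, 1, 1, 1]

lemma lie_h_eigenbasis [CharP k 3] (l : Fin 3) (i : Fin 8) :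
    ⁅h k l, eigenbasis k i⁆ = (weight i : k) • eigenbasis k i := by
  rw [coe_eigenbasis]
  fin_cases i <;> simp [weight, lie_h_h, lie_h_e, lie_h_f]

end Basis

section Coboundaries

variable (φ : sl3 k [⋀^Fin 2]→ₗ[k] k)

lemma ceCoboundary₂_e_e_e :
    ceCoboundary₂ φ ![e k 0, e k 1, e k 2] =
      φ ![e k 0, f k 0] + φ ![e k 1, f k 1] + φ ![e k 2, f k 2] := by
  have h₀ : ⁅e k 0, e k 1⁆ = f k 2 := lie_e_e 0
  have h₁ : ⁅e k 1, e k 2⁆ = f k 0 := lie_e_e 1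
  have h₂ : ⁅e k 2, e k 0⁆ = f k 1 := lie_e_e 2
  simp only [ceCoboundary₂_apply, Matrix.cons_val, h₀, h₁, h₂,
    alternatingMap_vec2_swap φ (e k _) (f k _)]
  ring

lemma ceCoboundary₂_f_f_f :
    ceCoboundary₂ φ ![f k 0, f k 1, f k 2] =
      φ ![e k 0, f k 0] + φ ![e k 1, f k 1] + φ ![e k 2, f k 2] := by
  have h₀ : ⁅f k 0, f k 1⁆ = -e k 2 := lie_f_f 0
  have h₁ : ⁅f k 1, f k 2⁆ = -e k 0 := lie_f_f 1
  have h₂ : ⁅f k 2, f k 0⁆ = -e k 1 := lie_f_f 2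
  simp only [ceCoboundary₂_apply, Matrix.cons_val, h₀, h₁, h₂, alternatingMap_vecCons_neg]
  ring

lemma ceCoboundary₂_h_e_f [CharP k 3] (l i j : Fin 3) :
    ceCoboundary₂ φ ![h k l, e k i, f k j] = φ ![h k l, ⁅e k i, f k j⁆] := by
  have hf : ⁅f k j, h k l⁆ = -f k j := by rw [← lie_skew, lie_h_f]
  simp only [ceCoboundary₂_apply, Matrix.cons_val, lie_h_e, hf, alternatingMap_vecCons_neg]
  rw [alternatingMap_vec2_swap φ (h k l), alternatingMap_vec2_swap φ (e k i) (f k j)]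
  ring

lemma exists_twoCochain (a c : k) : ∃ φ : sl3 k [⋀^Fin 2]→ₗ[k] k,
    φ ![e k 0, f k 0] + φ ![e k 1, f k 1] + φ ![e k 2, f k 2] = a ∧ φ ![h k 0, h k 1] = c := by
  let entry (i j : Fin 3) : Module.Dual k (sl3 k) :=
    { toFun A := A.val i j, map_add' _ _ := rfl, map_smul' _ _ := rfl }
  have entry_apply (i j : Fin 3) (A : sl3 k) : entry i j A = A.val i j := rfl
  refine ⟨a • dualWedge (entry 0 1) (entry 1 0) + c • dualWedge (entry 0 0) (entry 1 1), ?_, ?_⟩ <;>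
    simp [dualWedge_apply, entry_apply, val_e, val_f, val_h]

end Coboundaries

section Coordinates

/-- The linear functionals on `3`-cochains which vanish on coboundaries and separate cohomology
classes: the first is dual to the class of the Cartan form, and the other two triples are dual
to the classes of the orbit forms of the dual and of the standard representation. -/
def classCoordinates : (sl3 k [⋀^Fin 3]→ₗ[k] k) →ₗ[k] k × (Fin 3 → k) × (Fin 3 → k) where
  toFun ψ := (ψ ![f k 0, f k 1, f k 2] - ψ ![e k 0, e k 1, e k 2],
    fun i ↦ ψ ![h k i, e k i, f k (i + 2)], fun i ↦ ψ ![h k i, e k i, f k (i + 1)])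
  map_add' ψ χ := by
    ext <;> simp only [AlternatingMap.add_apply, Prod.mk_add_mk, Pi.add_apply]
    ring
  map_smul' c ψ := by
    ext <;> simp [mul_sub]

lemma classCoordinates_ceCoboundary₂ [CharP k 3] (φ : sl3 k [⋀^Fin 2]→ₗ[k] k) :
    classCoordinates (ceCoboundary₂ φ) = 0 := by
  have h_e_f {i j : Fin 3} (hij : i ≠ j) : ceCoboundary₂ φ ![h k i, e k i, f k j] = 0 := by
    rw [ceCoboundary₂_h_e_f, lie_e_f_of_ne hij, alternatingMap_vec2_swap,
      alternatingMap_vecCons_zero, neg_zero]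
  refine Prod.ext ?_ (Prod.ext (funext fun i ↦ h_e_f (by decide +revert))
    (funext fun i ↦ h_e_f (by decide +revert)))
  exact sub_eq_zero.2 ((ceCoboundary₂_f_f_f φ).trans (ceCoboundary₂_e_e_e φ).symm)

end Coordinates

section Cocycles

variable {ψ : sl3 k [⋀^Fin 3]→ₗ[k] k}

lemma lie_e_e_eq_or_of_ne {i j l : Fin 3} (hij : i ≠ j) (hjl : j ≠ l) (hil : i ≠ l) :
    ⁅e k i, e k j⁆ = f k l ∨ ⁅e k i, e k j⁆ = -f k l := by
  have orientation : (j = i + 1 ∧ l = i + 2) ∨ (i = j + 1 ∧ l = j + 2) := by decide +revert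
  rcases orientation with ⟨rfl, rfl⟩ | ⟨rfl, rfl⟩
  · exact .inl (lie_e_e i)
  · exact .inr (by rw [← lie_skew, lie_e_e])

lemma lie_f_f_eq_or_of_ne {i j l : Fin 3} (hij : i ≠ j) (hjl : j ≠ l) (hil : i ≠ l) :
    ⁅f k i, f k j⁆ = e k l ∨ ⁅f k i, f k j⁆ = -e k l := by
  have orientation : (j = i + 1 ∧ l = i + 2) ∨ (i = j + 1 ∧ l = j + 2) := by decide +revert
  rcases orientation with ⟨rfl, rfl⟩ | ⟨rfl, rfl⟩
  · exact .inr (lie_f_f i)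
  · exact .inl (by rw [← lie_skew, lie_f_f, neg_neg])

lemma apply_h_e_f_of_ne_of_ne (hψ : ψ ∈ ceZ k (sl3 k) k 3) {i j l : Fin 3}
    (hij : i ≠ j) (hjl : j ≠ l) (hil : i ≠ l) : ψ ![h k j, e k i, f k l] = 0 := by
  have hd := mem_ceZ_three.1 hψ (e k i) (e k j) (f k j) (f k l)
  have he : ψ ![⁅e k i, e k j⁆, f k j, f k l] = 0 := by
    rcases lie_e_e_eq_or_of_ne (k := k) hij hjl hil with h | h <;>
      simp [h, alternatingMap_vecCons_neg, alternatingMap_vec3_self_outer]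
  have hf : ψ ![⁅f k j, f k l⁆, e k i, e k j] = 0 := by
    rcases lie_f_f_eq_or_of_ne (k := k) hjl hil.symm hij.symm with h | h <;>
      simp [h, alternatingMap_vecCons_neg, alternatingMap_vec3_self_left]
  simpa only [he, hf, lie_e_f, lie_e_f_of_ne hij, lie_e_f_of_ne hil, lie_e_f_of_ne hjl,
    alternatingMap_vecCons_zero, sub_zero, zero_add, add_zero] using hd

lemma apply_h_e_f_add_apply_h_e_f (hψ : ψ ∈ ceZ k (sl3 k) k 3) (i : Fin 3) :
    ψ ![h k i, e k (i + 1), f k (i + 1)] + ψ ![h k (i + 1), e k i, f k i] =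
      ψ ![f k 0, f k 1, f k 2] - ψ ![e k 0, e k 1, e k 2] := by
  have hd := mem_ceZ_three.1 hψ (e k i) (e k (i + 1)) (f k i) (f k (i + 1))
  simp only [lie_e_e, lie_f_f, lie_e_f, lie_e_f_of_ne (k := k) (i := i) (j := i + 1) (by simp),
    lie_e_f_of_ne (k := k) (i := i + 1) (j := i) (by simp), alternatingMap_vecCons_zero,
    alternatingMap_vecCons_neg, alternatingMap_vec3_cycle ψ (e k) i,
    alternatingMap_vec3_cycle ψ (f k) i] at hd
  linear_combination -hd

lemma sum_apply_h_e_f [CharP k 3] (hψ : ψ ∈ ceZ k (sl3 k) k 3) (l : Fin 3) :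
    ψ ![h k l, e k 0, f k 0] + ψ ![h k l, e k 1, f k 1] + ψ ![h k l, e k 2, f k 2] = 0 := by
  have hd := mem_ceZ_three.1 hψ (e k 0) (e k 1) (e k 2) (h k l)
  have h₀ : ⁅e k 0, e k 1⁆ = f k 2 := lie_e_e 0
  have h₁ : ⁅e k 1, e k 2⁆ = f k 0 := lie_e_e 1
  have h₂ : ⁅e k 0, e k 2⁆ = -f k 1 := by
    rw [← lie_skew]
    exact congrArg _ (lie_e_e 2)
  have he (i : Fin 3) : ⁅e k i, h k l⁆ = e k i := by rw [← lie_skew, lie_h_e, neg_neg]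
  have reorder (i : Fin 3) : ψ ![f k i, e k i, h k l] = -ψ ![h k l, e k i, f k i] := by
    rw [alternatingMap_vec3_rotate, alternatingMap_vec3_swap]
  rw [h₀, h₁, h₂, he, he, he, alternatingMap_vecCons_neg, reorder, reorder, reorder,
    alternatingMap_vec3_swap_left ψ (e k 0) (e k 1),
    ← alternatingMap_vec3_rotate ψ (e k 2) (e k 0) (e k 1)] at hd
  linear_combination ψ ![e k 0, e k 1, e k 2] * CharP.ofNat_eq_zero k 3 - hd

lemma sum_apply_h (x y : sl3 k) : ψ ![h k 0, x, y] + ψ ![h k 1, x, y] + ψ ![h k 2, x, y] = 0 := by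
  rw [← ψ.map_vecCons_add, ← ψ.map_vecCons_add, h_add_h_add_h, alternatingMap_vecCons_zero]

lemma apply_h_eq_zero {i j : Fin 3} (hij : i ≠ j) {x y : sl3 k} (hi : ψ ![h k i, x, y] = 0)
    (hj : ψ ![h k j, x, y] = 0) (l : Fin 3) : ψ ![h k l, x, y] = 0 := by
  have hsum := sum_apply_h (ψ := ψ) x y
  fin_cases i <;> fin_cases j <;> fin_cases l <;> simp_all

lemma apply_h_e_f_of_ne (hψ : ψ ∈ ceZ k (sl3 k) k 3) (hψ₀ : classCoordinates ψ = 0)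
    (l : Fin 3) {i j : Fin 3} (hij : i ≠ j) : ψ ![h k l, e k i, f k j] = 0 := by
  obtain ⟨m, him, hmj⟩ : ∃ m, i ≠ m ∧ m ≠ j := by decide +revert
  have hi : ψ ![h k i, e k i, f k j] = 0 := by
    have hj : j = i + 1 ∨ j = i + 2 := by decide +revert
    rcases hj with rfl | rfl
    · exact congrFun (congrArg (·.2.2) hψ₀) i
    · exact congrFun (congrArg (·.2.1) hψ₀) i
  exact apply_h_eq_zero him hi (apply_h_e_f_of_ne_of_ne hψ him hmj hij) l

lemma apply_h_e_f_self [CharP k 3] (hψ : ψ ∈ ceZ k (sl3 k) k 3) (hψ₀ : classCoordinates ψ = 0)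
    (h₀₁ : ψ ![h k 0, e k 1, f k 1] = 0) (l i : Fin 3) : ψ ![h k l, e k i, f k i] = 0 := by
  have three := CharP.ofNat_eq_zero k 3
  have h_opp : ψ ![f k 0, f k 1, f k 2] - ψ ![e k 0, e k 1, e k 2] = 0 := congrArg Prod.fst hψ₀
  have skew₀₁ : ψ ![h k 0, e k 1, f k 1] + ψ ![h k 1, e k 0, f k 0] = 0 :=
    (apply_h_e_f_add_apply_h_e_f hψ 0).trans h_opp
  have skew₁₂ : ψ ![h k 1, e k 2, f k 2] + ψ ![h k 2, e k 1, f k 1] = 0 :=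
    (apply_h_e_f_add_apply_h_e_f hψ 1).trans h_opp
  have skew₂₀ : ψ ![h k 2, e k 0, f k 0] + ψ ![h k 0, e k 2, f k 2] = 0 :=
    (apply_h_e_f_add_apply_h_e_f hψ 2).trans h_opp
  have row (l) := sum_apply_h_e_f hψ l
  have col (i) := sum_apply_h (ψ := ψ) (e k i) (f k i)
  have h₁₀ : ψ ![h k 1, e k 0, f k 0] = 0 := by linear_combination skew₀₁ - h₀₁
  have h₀₀ : ψ ![h k 0, e k 0, f k 0] = 0 := by
    linear_combination ψ ![h k 0, e k 0, f k 0] * three - col 0 + skew₀₁ + skew₂₀ - row 0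
  have h₁₁ : ψ ![h k 1, e k 1, f k 1] = 0 := by
    linear_combination ψ ![h k 1, e k 1, f k 1] * three - col 1 + skew₀₁ + skew₁₂ - row 1
  have h₀₂ : ψ ![h k 0, e k 2, f k 2] = 0 := by linear_combination row 0 - h₀₀ - h₀₁
  have h₁₂ : ψ ![h k 1, e k 2, f k 2] = 0 := by linear_combination row 1 - h₁₀ - h₁₁
  fin_cases i
  · exact apply_h_eq_zero (by decide) h₀₀ h₁₀ l
  · exact apply_h_eq_zero (by decide) h₀₁ h₁₁ l
  · exact apply_h_eq_zero (by decide) h₀₂ h₁₂ l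

lemma apply_h_e_f_eq_zero [CharP k 3] (hψ : ψ ∈ ceZ k (sl3 k) k 3) (hψ₀ : classCoordinates ψ = 0)
    (h₀₁ : ψ ![h k 0, e k 1, f k 1] = 0) (l i j : Fin 3) : ψ ![h k l, e k i, f k j] = 0 := by
  rcases eq_or_ne i j with rfl | hij
  · exact apply_h_e_f_self hψ hψ₀ h₀₁ l i
  · exact apply_h_e_f_of_ne hψ hψ₀ l hij

lemma mem_ceB_of_apply_eq_zero [CharP k 3] (hψ : ψ ∈ ceZ k (sl3 k) k 3)
    (hψ₀ : classCoordinates ψ = 0) (h_eee : ψ ![e k 0, e k 1, e k 2] = 0)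
    (h₀₁ : ψ ![h k 0, e k 1, f k 1] = 0) : ψ ∈ ceB k (sl3 k) k 3 := by
  have h_fff : ψ ![f k 0, f k 1, f k 2] = 0 := (sub_eq_zero.1 (congrArg Prod.fst hψ₀)).trans h_eee
  have h_hef := apply_h_e_f_eq_zero hψ hψ₀ h₀₁
  have weight_cases : ∀ i j l : Fin 8, i < j → j < l →
      (i = 2 ∧ j = 3 ∧ l = 4) ∨ (i = 5 ∧ j = 6 ∧ l = 7) ∨
      3 ∣ (weight i + weight j + weight l) ^ 2 - 1 ∨
      ((i = 0 ∨ i = 1) ∧ (j = 2 ∨ j = 3 ∨ j = 4) ∧ (l = 5 ∨ l = 6 ∨ l = 7)) := by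
    decide
  have h_weight (i j l : Fin 8) (hij : i < j) (hjl : j < l) :
      3 ∣ (weight i + weight j + weight l) ^ 2 - 1 ∨
        ψ ![eigenbasis k i, eigenbasis k j, eigenbasis k l] = 0 := by
    rw [coe_eigenbasis]
    rcases weight_cases i j l hij hjl with ⟨rfl, rfl, rfl⟩ | ⟨rfl, rfl, rfl⟩ | hw |
      ⟨rfl | rfl, rfl | rfl | rfl, rfl | rfl | rfl⟩
    · exact .inr h_eee
    · exact .inr h_fff
    · exact .inl hw
    all_goals exact .inr (h_hef _ _ _)
  refine mem_ceB_of_sq_weight (eigenbasis k) (lie_h_eigenbasis k 0) hψ fun i j l hij hjl ↦ ?_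
  rcases h_weight i j l hij hjl with hw | h_zero
  · have hw' := (CharP.intCast_eq_zero_iff k 3 _).2 hw
    push_cast at hw'
    rw [sub_eq_zero.1 hw', one_smul]
  · rw [h_zero, smul_zero]

end Cocycles

lemma mem_ceB_of_classCoordinates_eq_zero [CharP k 3] {ψ : sl3 k [⋀^Fin 3]→ₗ[k] k}
    (hψ : ψ ∈ ceZ k (sl3 k) k 3) (hψ₀ : classCoordinates ψ = 0) : ψ ∈ ceB k (sl3 k) k 3 := by
  obtain ⟨φ, h_trace, h_cartan⟩ :=
    exists_twoCochain (ψ ![e k 0, e k 1, e k 2]) (ψ ![h k 0, e k 1, f k 1])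
  have hφ : ceCoboundary₂ φ ∈ ceB k (sl3 k) k 3 := mem_ceB_three.2 ⟨φ, rfl⟩
  suffices ψ - ceCoboundary₂ φ ∈ ceB k (sl3 k) k 3 by simpa using add_mem this hφ
  apply mem_ceB_of_apply_eq_zero
  · exact sub_mem hψ (ceCoboundary₂_mem_ceZ φ)
  · rw [map_sub, hψ₀, classCoordinates_ceCoboundary₂, sub_zero]
  · rw [AlternatingMap.sub_apply, ceCoboundary₂_e_e_e, h_trace, sub_self]
  · rw [AlternatingMap.sub_apply, ceCoboundary₂_h_e_f, lie_e_f, h_cartan, sub_self]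

section Representations

lemma lie_eq_mulVec (A : sl3 k) (v : Fin 3 → k) : ⁅A, v⁆ = A.val.mulVec v := rfl

lemma trace_toEnd_standard (A : sl3 k) :
    LinearMap.trace k (Fin 3 → k) (LieModule.toEnd k (sl3 k) (Fin 3 → k) A) = 0 :=
  (Matrix.trace_toLin'_eq A.val).trans (trace_val A)

lemma trace_toEnd_dual (A : sl3 k) :
    LinearMap.trace k (Module.Dual k (Fin 3 → k))
      (LieModule.toEnd k (sl3 k) (Module.Dual k (Fin 3 → k)) A) = 0 := by
  have h : LieModule.toEnd k (sl3 k) (Module.Dual k (Fin 3 → k)) A =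
      (-1 : k) • Module.Dual.transpose (LieModule.toEnd k (sl3 k) (Fin 3 → k) A) :=
    LinearMap.ext fun α ↦ LinearMap.ext fun v ↦ by simp [Module.Dual.transpose_apply]
  exact (congrArg _ h).trans <| (map_smul _ _ _).trans <| by
    rw [LinearMap.trace_transpose', trace_toEnd_standard, smul_zero]

variable (k)

/-- The orbit form of the `i`-th basis vector of the standard representation. -/
noncomputable def columnForm (i : Fin 3) : sl3 k [⋀^Fin 3]→ₗ[k] k :=
  orbitForm (Pi.basisFun k (Fin 3)) (Pi.basisFun k (Fin 3) i)

/-- The orbit form of the `i`-th coordinate in the dual of the standard representation. -/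
noncomputable def rowForm (i : Fin 3) : sl3 k [⋀^Fin 3]→ₗ[k] k :=
  orbitForm (Pi.basisFun k (Fin 3)).dualBasis ((Pi.basisFun k (Fin 3)).dualBasis i)

variable {k}

lemma columnForm_apply (i : Fin 3) (A B C : sl3 k) :
    columnForm k i ![A, B, C] = (Matrix.of ![A.val.col i, B.val.col i, C.val.col i]).det := by
  simp only [columnForm, orbitForm_apply, Pi.basisFun_apply, lie_eq_mulVec,
    Matrix.mulVec_single_one]
  rw [Pi.basisFun_det]
  rfl

lemma rowForm_apply (i : Fin 3) (A B C : sl3 k) :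
    rowForm k i ![A, B, C] = -(Matrix.of ![A.val i, B.val i, C.val i]).det := by
  have entry (A : sl3 k) (j : Fin 3) : ⁅A, (Pi.basisFun k (Fin 3)).dualBasis i⁆
      (Pi.basisFun k (Fin 3) j) = -A.val i j := by
    simp
  rw [rowForm, orbitForm_apply, Module.Basis.det_apply]
  simp only [Matrix.det_fin_three, Module.Basis.toMatrix_apply, Module.Basis.dualBasis_repr,
    Matrix.cons_val, Matrix.of_apply, entry]
  ring

lemma columnForm_mem_ceZ (i : Fin 3) : columnForm k i ∈ ceZ k (sl3 k) k 3 :=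
  orbitForm_mem_ceZ _ trace_toEnd_standard _

lemma rowForm_mem_ceZ (i : Fin 3) : rowForm k i ∈ ceZ k (sl3 k) k 3 :=
  orbitForm_mem_ceZ _ trace_toEnd_dual _

lemma classCoordinates_columnForm (i : Fin 3) :
    classCoordinates (columnForm k (i + 1)) = (0, 0, Pi.single i 1) := by
  refine Prod.ext ?_ (Prod.ext (funext fun j ↦ ?_) (funext fun j ↦ ?_))
  all_goals
    simp only [classCoordinates, LinearMap.coe_mk, AddHom.coe_mk, columnForm_apply,
      Matrix.det_fin_three, Matrix.of_apply, Matrix.cons_val, Matrix.col_apply, val_e, val_f, val_h,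
      Matrix.sub_apply, Matrix.single_apply]
  · fin_cases i <;> simp
  · fin_cases i <;> fin_cases j <;> simp
  · fin_cases i <;> fin_cases j <;> simp

lemma classCoordinates_rowForm (i : Fin 3) :
    classCoordinates (rowForm k i) = -(0, Pi.single i 1, 0) := by
  refine Prod.ext ?_ (Prod.ext (funext fun j ↦ ?_) (funext fun j ↦ ?_))
  all_goals
    simp only [classCoordinates, LinearMap.coe_mk, AddHom.coe_mk, rowForm_apply,
      Matrix.det_fin_three, Matrix.of_apply, Matrix.cons_val, val_e, val_f, val_h,
      Matrix.sub_apply, Matrix.single_apply]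
  · fin_cases i <;> simp
  · fin_cases i <;> fin_cases j <;> simp
  · fin_cases i <;> fin_cases j <;> simp

end Representations

section CartanClass

variable (k) in
/-- The Cartan form of the trace form of the standard representation. -/
noncomputable def traceCartanForm : sl3 k [⋀^Fin 3]→ₗ[k] k :=
  cartanForm (LieModule.traceForm k (sl3 k) (Fin 3 → k))
    ⟨LieModule.traceForm_comm k (sl3 k) (Fin 3 → k)⟩
    (LieModule.traceForm_lieInvariant k (sl3 k) (Fin 3 → k))

lemma traceCartanForm_apply (A B C : sl3 k) :
    traceCartanForm k ![A, B, C] = Matrix.trace (⁅A, B⁆.val * C.val) := by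
  rw [← Matrix.trace_toLin'_eq, Matrix.toLin'_mul]
  rfl

lemma traceCartanForm_mem_ceZ : traceCartanForm k ∈ ceZ k (sl3 k) k 3 :=
  cartanForm_mem_ceZ _ _

lemma classCoordinates_traceCartanForm [CharP k 3] :
    classCoordinates (traceCartanForm k) = (1, 0, 0) := by
  have h_e_f {i j : Fin 3} (hij : i ≠ j) : traceCartanForm k ![h k i, e k i, f k j] = 0 := by
    rw [traceCartanForm_apply, lie_h_e]
    simp [val_e, val_f, hij]
  refine Prod.ext ?_ (Prod.ext (funext fun i ↦ h_e_f (by decide +revert))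
    (funext fun i ↦ h_e_f (by decide +revert)))
  have h_e : ⁅e k 0, e k 1⁆ = f k 2 := lie_e_e 0
  have h_f : ⁅f k 0, f k 1⁆ = -e k 2 := lie_f_f 0
  have h_fff : traceCartanForm k ![f k 0, f k 1, f k 2] = -1 := by
    rw [traceCartanForm_apply, h_f]
    simp [val_e, val_f]
  have h_eee : traceCartanForm k ![e k 0, e k 1, e k 2] = 1 := by
    rw [traceCartanForm_apply, h_e]
    simp [val_e, val_f]
  change traceCartanForm k ![f k 0, f k 1, f k 2] - traceCartanForm k ![e k 0, e k 1, e k 2] = 1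
  rw [h_fff, h_eee]
  linear_combination -CharP.ofNat_eq_zero k 3

end CartanClass

section Classification

variable (k)

/-- The restriction of `classCoordinates` to cocycles. -/
def cocycleCoordinates : ceZ k (sl3 k) k 3 →ₗ[k] k × (Fin 3 → k) × (Fin 3 → k) :=
  classCoordinates ∘ₗ (ceZ k (sl3 k) k 3).subtype

lemma ker_cocycleCoordinates [CharP k 3] :
    (cocycleCoordinates k).ker = (ceB k (sl3 k) k 3).comap (ceZ k (sl3 k) k 3).subtype := by
  ext ⟨ψ, hψ⟩
  refine ⟨mem_ceB_of_classCoordinates_eq_zero hψ, fun h ↦ ?_⟩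
  obtain ⟨φ, rfl⟩ := mem_ceB_three.1 h
  exact classCoordinates_ceCoboundary₂ φ

lemma cocycleCoordinates_surjective [CharP k 3] : Function.Surjective (cocycleCoordinates k) := by
  intro c
  let ψ := c.1 • traceCartanForm k - ∑ i, c.2.1 i • rowForm k i
    + ∑ i, c.2.2 i • columnForm k (i + 1)
  have hψ : ψ ∈ ceZ k (sl3 k) k 3 :=
    add_mem (sub_mem (Submodule.smul_mem _ _ traceCartanForm_mem_ceZ)
      (sum_mem fun i _ ↦ Submodule.smul_mem _ _ (rowForm_mem_ceZ i)))
      (sum_mem fun i _ ↦ Submodule.smul_mem _ _ (columnForm_mem_ceZ (i + 1)))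
  refine ⟨⟨ψ, hψ⟩, (?_ : classCoordinates ψ = c)⟩
  simp only [ψ, map_add, map_sub, map_sum, map_smul, classCoordinates_traceCartanForm,
    classCoordinates_rowForm, classCoordinates_columnForm]
  ext i <;> simp [Prod.fst_sum, Prod.snd_sum, Finset.sum_apply, Pi.single_apply]

/-- The coordinates which `classCoordinates` induces on the third cohomology space. -/
noncomputable def cohomologyCoordinates [CharP k 3] :
    ceH k (sl3 k) k 3 ≃ₗ[k] k × (Fin 3 → k) × (Fin 3 → k) :=
  (Submodule.quotEquivOfEq _ _ (ker_cocycleCoordinates k).symm).trans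
    ((cocycleCoordinates k).quotKerEquivOfSurjective (cocycleCoordinates_surjective k))

end Classification

end sl3

theorem H3_trivial_coeffs_dim_general (k : Type*) [Field k] [CharP k 3] :
    Module.finrank k (ceH k (sl3 k) k 3) = 7 := by
  rw [(sl3.cohomologyCoordinates k).finrank_eq]
  simp

theorem H3_trivial_coeffs_dim (k : Type*) [Field k] [IsAlgClosed k] [CharP k 3] :
    Module.finrank k (ceH k (sl3 k) k 3) = 7 :=
  H3_trivial_coeffs_dim_general k
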